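/- Let h₁, h₂, η₁, η₂, p, q be complex numbers with h₁ ≠ 0, h₂ ≠ 0, η₁ ≠ 0, η₂ ≠ 0. Assume the Heymann resolvent equations h₁·η₁^5 − 10·η₁^2 + 15·η₁ − 6 = 0 and h₂·η₂^5 − 10·η₂^2 + 15·η₂ − 6 = 0, and the relation η₁·η₂ = η₁ + η₂. Define α = −2·(p^3/h₁ + q^3/h₂), β = 3·(p^3·(p−2q)/h₁ − q^3·(2p−q)/h₂), and γ = −6·(p^3·(p^2−5pq+10q^2)/h₁ + q^3·(10p^2−5pq+q^2)/h₂). Then y = p·η₁ + q·η₂ is a root of the principal quintic: y^5 + 5α·y^2 + 5β·y + γ = 0. -/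

import Mathlib

lemma heymann_aux (h a b : ℂ) (hh : h ≠ 0) (ha : a ≠ 0)
    (hr : h * a ^ 5 - 10 * a ^ 2 + 15 * a - 6 = 0) (hp : a * b = a + b) :
    a ^ 5 = h⁻¹ * (10 * a ^ 2 - 15 * a + 6) ∧
    a ^ 4 * b = h⁻¹ * (4 * a * b - 3 * b + 6 * a - 6) ∧
    a ^ 3 * b ^ 2 = h⁻¹ * (b ^ 2 + 3 * b + 6) := by
  have h0 : a ^ 5 = h⁻¹ * (10 * a ^ 2 - 15 * a + 6) := by
    field_simp
    linear_combination hr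
  refine ⟨h0, ?_, ?_⟩
  · apply mul_left_cancel₀ ha
    linear_combination b * h0 + h⁻¹ * (6 * a - 6) * hp
  · apply mul_left_cancel₀ (pow_ne_zero 2 ha)
    linear_combination b ^ 2 * h0 + h⁻¹ * (9 * a * b - 6 * b + 6 * a) * hp

/-- With Heymann's parametrization of the coefficients, `y = p·η₁ + q·η₂` is a root
of the principal quintic. -/
theorem heymann_root (h₁ h₂ η₁ η₂ p q : ℂ)
    (hh₁ : h₁ ≠ 0) (hh₂ : h₂ ≠ 0) (hη₁ : η₁ ≠ 0) (hη₂ : η₂ ≠ 0)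
    (hres₁ : h₁ * η₁ ^ 5 - 10 * η₁ ^ 2 + 15 * η₁ - 6 = 0)
    (hres₂ : h₂ * η₂ ^ 5 - 10 * η₂ ^ 2 + 15 * η₂ - 6 = 0)
    (hprod : η₁ * η₂ = η₁ + η₂) :
    letI α : ℂ := -2 * (p ^ 3 / h₁ + q ^ 3 / h₂)
    letI β : ℂ := 3 * (p ^ 3 * (p - 2 * q) / h₁ - q ^ 3 * (2 * p - q) / h₂)
    letI γ : ℂ := -6 * (p ^ 3 * (p ^ 2 - 5 * p * q + 10 * q ^ 2) / h₁
      + q ^ 3 * (10 * p ^ 2 - 5 * p * q + q ^ 2) / h₂)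
    letI y : ℂ := p * η₁ + q * η₂
    y ^ 5 + 5 * α * y ^ 2 + 5 * β * y + γ = 0 := by
  obtain ⟨a0, a1, a2⟩ := heymann_aux h₁ η₁ η₂ hh₁ hη₁ hres₁ hprod
  obtain ⟨b0, b1, b2⟩ := heymann_aux h₂ η₂ η₁ hh₂ hη₂ hres₂ (by linear_combination hprod)
  simp only [div_eq_mul_inv]
  linear_combination p ^ 5 * a0 + 5 * p ^ 4 * q * a1 + 10 * p ^ 3 * q ^ 2 * a2
    + q ^ 5 * b0 + 5 * q ^ 4 * p * b1 + 10 * q ^ 3 * p ^ 2 * b2
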